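/- Let D ≥ 1 and δ ≥ 0, let X₁, …, X_D be geodesic metric spaces each of which is δ-hyperbolic, and let Γ be a group acting by isometries on each Xᵢ; equip the product 𝕏 = X₁ × ⋯ × X_D with the supremum metric and let Γ act diagonally. If the action of Γ on 𝕏 is acylindrical and is not elliptic (some Γ-orbit in 𝕏 is unbounded), then either Γ contains a subgroup isomorphic to the free group on two generators, or there exists k with 1 ≤ k ≤ D such that Γ is virtually isomorphic to ℤᵏ, i.e. there are a finite-index subgroup Γ' ≤ Γ and a finite normal subgroup K ⊴ Γ' with Γ'/K isomorphic to ℤᵏ. -/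

import Mathlib

open Set Metric

/-- The two-point `ε`-coarse stabilizer `set_ε(x) ∩ set_ε(y)` of an isometric action. -/
def coarseStab2 (G : Type*) {Y : Type*} [Group G] [PseudoMetricSpace Y] [MulAction G Y]
    (ε : ℝ) (x y : Y) : Set G :=
  {g : G | dist (g • x) x ≤ ε ∧ dist (g • y) y ≤ ε}

/-- An action is *acylindrical* if for every `ε > 0` there are `R, N ≥ 0` such that
whenever `dist x y ≥ R` the two-point `ε`-coarse stabilizer has at most `N` elements. -/
def IsAcylindricalAction (G Y : Type*) [Group G] [PseudoMetricSpace Y] [MulAction G Y] : Prop :=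
  ∀ ε : ℝ, 0 < ε → ∃ (R : ℝ) (N : ℕ), 0 ≤ R ∧ ∀ x y : Y, R ≤ dist x y →
    (coarseStab2 G ε x y).Finite ∧ (coarseStab2 G ε x y).ncard ≤ N

/-- The Gromov product `⟨x,y⟩_o = (d(x,o) + d(y,o) − d(x,y))/2`. -/
noncomputable def gromovProd {X : Type*} [PseudoMetricSpace X] (o x y : X) : ℝ :=
  (dist x o + dist y o - dist x y) / 2

/-- `α` is a unit-speed geodesic from `x` to `y`, parametrized on `[0, dist x y]`. -/
def IsGeodesicSeg {X : Type*} [PseudoMetricSpace X] (x y : X) (α : ℝ → X) : Prop :=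
  α 0 = x ∧ α (dist x y) = y ∧
    ∀ s ∈ Set.Icc (0 : ℝ) (dist x y), ∀ t ∈ Set.Icc (0 : ℝ) (dist x y),
      dist (α s) (α t) = |s - t|

/-- A metric space is geodesic if any two points are joined by a unit-speed geodesic. -/
def IsGeodesicSpace (X : Type*) [PseudoMetricSpace X] : Prop :=
  ∀ x y : X, ∃ α : ℝ → X, IsGeodesicSeg x y α

/-- `X` is `δ`-hyperbolic: for all `a b c`, geodesics `α` from `a` to `b` and `γ` from `a`
to `c` satisfy `dist (α t) (γ t) ≤ δ` for `t ∈ [0, ⟨b,c⟩_a]`. -/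
def IsDeltaHyperbolic (X : Type*) [PseudoMetricSpace X] (δ : ℝ) : Prop :=
  ∀ a b c : X, ∀ α γ : ℝ → X, IsGeodesicSeg a b α → IsGeodesicSeg a c γ →
    ∀ t ∈ Set.Icc (0 : ℝ) (gromovProd a b c), dist (α t) (γ t) ≤ δ


namespace TitsAux

/-- Four-point hyperbolicity. -/
def Hyp4 (X : Type*) [PseudoMetricSpace X] (δ : ℝ) : Prop :=
  ∀ o x y z : X, min (gromovProd o x y) (gromovProd o y z) - δ ≤ gromovProd o x z

section basic
variable {X : Type*} [PseudoMetricSpace X]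

lemma gp_comm (o x y : X) : gromovProd o x y = gromovProd o y x := by
  unfold gromovProd; rw [dist_comm x y]; ring

lemma gp_nonneg (o x y : X) : 0 ≤ gromovProd o x y := by
  unfold gromovProd
  have := dist_triangle_right x y o
  linarith

lemma gp_le_left (o x y : X) : gromovProd o x y ≤ dist x o := by
  unfold gromovProd
  have := dist_triangle_left y o x
  linarith

lemma gp_le_right (o x y : X) : gromovProd o x y ≤ dist y o := by
  rw [gp_comm]; exact gp_le_left o y x

lemma gp_self_right (o x : X) : gromovProd o x x = dist x o := by
  unfold gromovProd; rw [dist_self]; ring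

lemma gp_base (o x : X) : gromovProd o x o = 0 := by
  unfold gromovProd; rw [dist_self]; ring

/-- `(x|y)_o = d(x,o) - (o|y)_x`. -/
lemma gp_flip (o x y : X) : gromovProd o x y = dist x o - gromovProd x o y := by
  unfold gromovProd; rw [dist_comm o x, dist_comm y x, dist_comm o y]; ring

lemma gp_lip_left (o x x' y : X) : gromovProd o x y ≤ gromovProd o x' y + dist x x' := by
  unfold gromovProd
  have := dist_triangle x x' o
  have := dist_triangle_left x' y x
  linarith

lemma gp_lip_right (o x y y' : X) : gromovProd o x y ≤ gromovProd o x y' + dist y y' := by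
  rw [gp_comm o x y, gp_comm o x y']; exact gp_lip_left o y y' x

lemma gp_lip_base (o o' x y : X) : gromovProd o x y ≤ gromovProd o' x y + dist o o' := by
  unfold gromovProd
  have := dist_triangle_right x o o'
  have := dist_triangle_right y o o'
  linarith

lemma hyp4_of_delta {δ : ℝ} (hgeo : IsGeodesicSpace X) (hhyp : IsDeltaHyperbolic X δ) :
    Hyp4 X δ := by
  intro o x y z
  obtain ⟨α, hα⟩ := hgeo o x
  obtain ⟨β, hβ⟩ := hgeo o y
  obtain ⟨γ, hγ⟩ := hgeo o z
  set t := min (gromovProd o x y) (gromovProd o y z) with ht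
  have ht0 : 0 ≤ t := le_min (gp_nonneg _ _ _) (gp_nonneg _ _ _)
  have h1 : t ≤ gromovProd o x y := min_le_left _ _
  have h2 : t ≤ gromovProd o y z := min_le_right _ _
  have d1 := hhyp o x y α β hα hβ t ⟨ht0, h1⟩
  have d2 := hhyp o y z β γ hβ hγ t ⟨ht0, h2⟩
  have hx : t ≤ dist o x := by rw [dist_comm]; exact h1.trans (gp_le_left _ _ _)
  have hz : t ≤ dist o z := by rw [dist_comm]; exact h2.trans (gp_le_right _ _ _)
  have e1 := hα.2.2 t ⟨ht0, hx⟩ (dist o x) ⟨dist_nonneg, le_rfl⟩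
  have e2 := hγ.2.2 t ⟨ht0, hz⟩ (dist o z) ⟨dist_nonneg, le_rfl⟩
  rw [hα.2.1, abs_of_nonpos (by linarith)] at e1
  rw [hγ.2.1, abs_of_nonpos (by linarith)] at e2
  have t1 := dist_triangle (α t) (β t) (γ t)
  have t2 := dist_triangle x (α t) z
  have t3 := dist_triangle (α t) (γ t) z
  rw [dist_comm x (α t)] at t2
  unfold gromovProd
  rw [dist_comm x o, dist_comm z o]
  linarith

/-- four point inequality in the distance form. -/
lemma fourpt {δ : ℝ} (h : Hyp4 X δ) (a b c d : X) :
    dist a b + dist c d ≤ max (dist a c + dist b d) (dist a d + dist b c) + 2 * δ := by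
  have := h d a c b
  unfold gromovProd at this
  rcases le_total (dist a c + dist b d) (dist a d + dist b c) with h1 | h1
  · rw [max_eq_right h1]
    rcases min_choice ((dist a d + dist c d - dist a c) / 2) ((dist c d + dist b d - dist c b) / 2)
      with h2 | h2
    · have h3 := min_le_right ((dist a d + dist c d - dist a c) / 2)
        ((dist c d + dist b d - dist c b) / 2)
      rw [h2] at this h3
      rw [dist_comm c b] at h3
      linarith
    · rw [h2, dist_comm c b] at this
      linarith
  · rw [max_eq_left h1]
    rcases min_choice ((dist a d + dist c d - dist a c) / 2) ((dist c d + dist b d - dist c b) / 2)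
      with h2 | h2
    · rw [h2] at this
      linarith
    · have h3 := min_le_left ((dist a d + dist c d - dist a c) / 2)
        ((dist c d + dist b d - dist c b) / 2)
      rw [h2] at this h3
      rw [dist_comm c b] at this h3
      linarith

/-- contrapositive usage: if `(x|z) ≤ c` and `(y|z) > c + δ` then `(x|y) ≤ c + δ`. -/
lemma hyp4_small {δ c : ℝ} (h : Hyp4 X δ) {o x y z : X} (h1 : gromovProd o x z ≤ c)
    (h2 : c + δ < gromovProd o y z) : gromovProd o x y ≤ c + δ := by
  by_contra hc
  push Not at hc
  have := h o x y z
  have := lt_min hc h2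
  linarith

end basic

section action
variable {X : Type*} [PseudoMetricSpace X] {G : Type*} [Group G] [MulAction G X]

/-- isometric action -/
def Iso (G X : Type*) [PseudoMetricSpace X] [Group G] [MulAction G X] : Prop :=
  ∀ (g : G) (x y : X), dist (g • x) (g • y) = dist x y

lemma gp_smul (hi : Iso G X) (g : G) (o x y : X) :
    gromovProd (g • o) (g • x) (g • y) = gromovProd o x y := by
  unfold gromovProd; rw [hi, hi, hi]

lemma gp_smul_base (hi : Iso G X) (g : G) (o x y : X) :
    gromovProd (g • o) x y = gromovProd o (g⁻¹ • x) (g⁻¹ • y) := by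
  rw [← gp_smul hi g o, smul_inv_smul, smul_inv_smul]

lemma dist_inv (hi : Iso G X) (g : G) (x y : X) : dist (g⁻¹ • x) y = dist x (g • y) := by
  rw [← hi g, smul_inv_smul]

lemma dist_inv_self (hi : Iso G X) (g : G) (x : X) : dist (g⁻¹ • x) x = dist (g • x) x := by
  rw [dist_inv hi, dist_comm]

lemma word_lemma (hi : Iso G X) {δ : ℝ} (h4 : Hyp4 X δ) (hδ : 0 ≤ δ) (o : X) {L c : ℝ}
    (hc : 0 ≤ c) (hL : 2 * c + 2 * δ < L) :
    ∀ (w : List G) (a : G), (∀ x ∈ a :: w, L ≤ dist (x • o) o) →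
      (a :: w).IsChain (fun a b => gromovProd o (a⁻¹ • o) (b • o) ≤ c) →
      L - c - δ ≤ gromovProd o (a • o) ((a :: w).prod • o) := by
  intro w
  induction w with
  | nil =>
    intro a ha _
    have := ha a (by simp)
    simp only [List.prod_cons, List.prod_nil, mul_one, gp_self_right]
    linarith
  | cons b w ih =>
    intro a ha hch
    rw [List.isChain_cons_cons] at hch
    have hb := ih b (fun x hx => ha x (List.mem_cons_of_mem _ hx)) hch.2
    have haL := ha a (by simp)
    set p := (b :: w).prod with hp
    have h1 : gromovProd o (a⁻¹ • o) (p • o) ≤ c + δ := by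
      refine hyp4_small h4 hch.1 ?_
      rw [gp_comm]; linarith
    have h2 : (a :: b :: w).prod = a * p := by rw [List.prod_cons]
    rw [h2, gp_flip, gp_smul_base hi, mul_smul, inv_smul_smul]
    linarith

/-- Free subgroup criterion. -/
lemma free_of_letters (hi : Iso G X) {δ : ℝ} (h4 : Hyp4 X δ) (hδ : 0 ≤ δ) (o : X) {L c : ℝ}
    (hc : 0 ≤ c) (hL : 2 * c + 2 * δ < L) (f : Fin 2 → G)
    (e : Fin 2 × Bool → G) (he : ∀ p, e p = cond p.2 (f p.1) (f p.1)⁻¹)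
    (hlen : ∀ p, L ≤ dist (e p • o) o)
    (hpr : ∀ p q, p ≠ q → gromovProd o (e p • o) (e q • o) ≤ c) :
    ∃ f : FreeGroup (Fin 2) →* G, Function.Injective f := by
  refine ⟨FreeGroup.lift f, (injective_iff_map_eq_one _).2 ?_⟩
  intro w hw
  by_contra hne
  rw [← FreeGroup.mk_toWord (x := w), FreeGroup.lift_mk] at hw
  have hred : FreeGroup.IsReduced w.toWord := FreeGroup.isReduced_toWord
  have hnil : w.toWord ≠ [] := fun h => hne (FreeGroup.toWord_eq_nil_iff.1 h)
  have hfun : (fun x : Fin 2 × Bool => cond x.2 (f x.1) (f x.1)⁻¹) = e := by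
    funext p; rw [he]
  rw [hfun] at hw
  obtain ⟨a, l, hal⟩ := List.exists_cons_of_ne_nil hnil
  rw [hal] at hw hred
  have hinv : ∀ p : Fin 2 × Bool, (e p)⁻¹ = e (p.1, !p.2) := by
    rintro ⟨i, b⟩
    rw [he, he]
    cases b <;> simp
  have := word_lemma hi h4 hδ o hc hL (l.map e) (e a) (by
      intro x hx
      rw [← List.map_cons, List.mem_map] at hx
      obtain ⟨p, _, rfl⟩ := hx
      exact hlen p) (by
      rw [← List.map_cons, List.isChain_map]
      refine List.IsChain.imp ?_ hred
      rintro ⟨i, b⟩ ⟨j, b'⟩ h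
      rw [hinv]
      apply hpr
      intro heq
      simp only [Prod.mk.injEq] at heq h
      have := h heq.1
      rw [← heq.2] at this
      cases b <;> simp at this)
  rw [← List.map_cons, hw, one_smul, gp_base] at this
  linarith

end action

section lox
variable {X : Type*} [PseudoMetricSpace X] {G : Type*} [Group G] [MulAction G X]

/-- Loxodromicity criterion at a base point. -/
def Lox (δ : ℝ) (o : X) (g : G) : Prop :=
  2 * gromovProd o (g • o) (g⁻¹ • o) + (3 * δ + 1) ≤ dist (g • o) o

lemma Lox.inv (hi : Iso G X) {δ : ℝ} {o : X} {g : G} (h : Lox δ o g) : Lox δ o g⁻¹ := by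
  unfold Lox at *
  rw [inv_inv, gp_comm, dist_inv_self hi]; exact h

lemma Lox.start (hi : Iso G X) {δ : ℝ} (h4 : Hyp4 X δ) (hδ : 0 ≤ δ) {o : X} {g : G}
    (h : Lox δ o g) (n : ℕ) :
    dist (g • o) o - gromovProd o (g • o) (g⁻¹ • o) - δ ≤
      gromovProd o (g • o) (g ^ (n + 1) • o) := by
  have h0 := gp_nonneg o (g • o) (g⁻¹ • o)
  have := word_lemma hi h4 hδ o (L := dist (g • o) o) h0
    (by unfold Lox at h; linarith) (List.replicate n g) g
    (by
      intro x hx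
      rw [← List.replicate_succ] at hx
      rw [List.eq_of_mem_replicate hx])
    (by
      rw [← List.replicate_succ]
      apply List.isChain_replicate_of_rel
      rw [gp_comm])
  rwa [← List.replicate_succ, List.prod_replicate] at this

lemma Lox.back (hi : Iso G X) {δ : ℝ} (h4 : Hyp4 X δ) (hδ : 0 ≤ δ) {o : X} {g : G}
    (h : Lox δ o g) (n : ℕ) :
    gromovProd o (g⁻¹ • o) (g ^ n • o) ≤ gromovProd o (g • o) (g⁻¹ • o) + δ := by
  have h0 := gp_nonneg o (g • o) (g⁻¹ • o)
  cases n with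
  | zero => rw [pow_zero, one_smul, gp_base]; linarith
  | succ n =>
    have h1 := h.start hi h4 hδ n
    refine hyp4_small h4 (z := g • o) (gp_comm _ _ _).le ?_
    rw [gp_comm o _ (g • o)]
    unfold Lox at h
    linarith

lemma Lox.grow (hi : Iso G X) {δ : ℝ} (h4 : Hyp4 X δ) (hδ : 0 ≤ δ) {o : X} {g : G}
    (h : Lox δ o g) (n : ℕ) : (n : ℝ) ≤ dist (g ^ n • o) o := by
  induction n with
  | zero => simp
  | succ n ih =>
    have h1 := h.back hi h4 hδ n
    have h2 : dist (g ^ (n + 1) • o) o = dist (g⁻¹ • o) (g ^ n • o) := by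
      rw [dist_inv hi, ← mul_smul, ← pow_succ', dist_comm]
    unfold Lox at h
    have h3 := dist_inv_self hi g o
    rw [h2]
    push_cast
    have h5 : gromovProd o (g⁻¹ • o) (g ^ n • o)
      = (dist (g⁻¹ • o) o + dist (g ^ n • o) o - dist (g⁻¹ • o) (g ^ n • o)) / 2 := rfl
    linarith

lemma dist_pow_le (hi : Iso G X) (o : X) (g : G) (n : ℕ) :
    dist (g ^ n • o) o ≤ n * dist (g • o) o := by
  induction n with
  | zero => simp
  | succ n ih =>
    have h1 := dist_triangle (g ^ (n + 1) • o) (g ^ n • o) o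
    rw [pow_succ, mul_smul, hi] at h1
    rw [pow_succ, mul_smul]
    push_cast
    linarith

/-- the forward and backward rays are transverse. -/
lemma Lox.transverse (hi : Iso G X) {δ : ℝ} (h4 : Hyp4 X δ) (hδ : 0 ≤ δ) {o : X} {g : G}
    (h : Lox δ o g) (n m : ℕ) :
    gromovProd o (g ^ n • o) (g⁻¹ ^ m • o) ≤ gromovProd o (g • o) (g⁻¹ • o) + 2 * δ := by
  have h0 := gp_nonneg o (g • o) (g⁻¹ • o)
  cases m with
  | zero => rw [pow_zero, one_smul, gp_base]; linarith
  | succ m =>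
    have h1 := (h.inv hi).start hi h4 hδ m
    have h2 := h.back hi h4 hδ n
    rw [gp_comm o (g⁻¹ • o) (g ^ n • o)] at h2
    rw [inv_inv, dist_inv_self hi, gp_comm o (g⁻¹ • o) (g • o)] at h1
    have := hyp4_small h4 (y := g⁻¹ ^ (m + 1) • o) h2 (by
      rw [gp_comm o (g⁻¹ ^ (m + 1) • o)]; unfold Lox at h; linarith)
    linarith

lemma Lox.ray (hi : Iso G X) {δ : ℝ} (h4 : Hyp4 X δ) (hδ : 0 ≤ δ) {o : X} {g : G}
    (h : Lox δ o g) (n m : ℕ) :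
    min (n : ℝ) m - (gromovProd o (g • o) (g⁻¹ • o) + 2 * δ) ≤
      gromovProd o (g ^ n • o) (g ^ m • o) := by
  wlog hnm : n ≤ m generalizing n m
  · rw [gp_comm o (g ^ n • o), min_comm]; exact this m n (by omega)
  have h1 := h.grow hi h4 hδ n
  rw [gp_flip o (g ^ n • o), gp_smul_base hi]
  obtain ⟨k, rfl⟩ := Nat.exists_eq_add_of_le hnm
  have h2 := h.transverse hi h4 hδ k n
  rw [pow_add, mul_smul, inv_smul_smul, ← inv_pow, gp_comm o _ (g ^ k • o)]
  have := min_le_left (n : ℝ) ((n + k : ℕ) : ℝ)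
  linarith

/-- asymptotic sequences -/
def Asym (o : X) (s t : ℕ → X) : Prop :=
  ∀ T : ℝ, ∃ N : ℕ, ∀ n, N ≤ n → T ≤ gromovProd o (s n) (t n)

lemma Asym.symm {o : X} {s t : ℕ → X} (h : Asym o s t) : Asym o t s := by
  intro T
  obtain ⟨N, hN⟩ := h T
  exact ⟨N, fun n hn => by rw [gp_comm]; exact hN n hn⟩

lemma Asym.trans {δ : ℝ} (h4 : Hyp4 X δ) {o : X} {s t u : ℕ → X} (h : Asym o s t)
    (h' : Asym o t u) : Asym o s u := by
  intro T
  obtain ⟨N, hN⟩ := h (T + δ)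
  obtain ⟨M, hM⟩ := h' (T + δ)
  refine ⟨max N M, fun n hn => ?_⟩
  have h1 := hN n (le_trans (le_max_left _ _) hn)
  have h2 := hM n (le_trans (le_max_right _ _) hn)
  have := h4 o (s n) (t n) (u n)
  have := le_min h1 h2
  linarith

lemma Asym.smul (hi : Iso G X) {o : X} {s t : ℕ → X} (h : Asym o s t) (g : G) :
    Asym o (fun n => g • s n) (fun n => g • t n) := by
  intro T
  obtain ⟨N, hN⟩ := h (T + dist (g • o) o)
  refine ⟨N, fun n hn => ?_⟩
  have h1 := hN n hn
  rw [← gp_smul hi g] at h1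
  have := gp_lip_base (g • o) o (g • s n) (g • t n)
  linarith

/-- the stabilizer of a boundary point -/
def stab (hi : Iso G X) {δ : ℝ} (h4 : Hyp4 X δ) (o : X) (s : ℕ → X) (hs : Asym o s s) :
    Subgroup G where
  carrier := {g | Asym o (fun n => g • s n) s}
  one_mem' := by simpa using hs
  mul_mem' := by
    intro a b ha hb
    simp only [Set.mem_ofPred_eq] at *
    have := (Asym.smul hi hb a).trans h4 ha
    simpa [mul_smul] using this
  inv_mem' := by
    intro a ha
    simp only [Set.mem_ofPred_eq] at *
    have := (Asym.smul hi ha a⁻¹).symm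
    simpa using this

/-- either some transversality fails to occur for all pairs, or some boundary stabilizer has
finite index. -/
lemma cover (hi : Iso G X) {δ : ℝ} (h4 : Hyp4 X δ) (o : X) (s : Bool → ℕ → X)
    (hs : ∀ a, Asym o (s a) (s a))
    (hcov : ∀ h : G, ∃ a b, Asym o (fun n => h • s a n) (s b)) :
    ∃ a, (stab hi h4 o (s a) (hs a)).FiniteIndex := by
  classical
  let c : Bool × Bool → G := fun p =>
    if h : ∃ h : G, Asym o (fun n => h • s p.1 n) (s p.2) then h.choose else 1
  have := Subgroup.exists_finiteIndex_of_leftCoset_cover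
    (H := fun p : Bool × Bool => stab hi h4 o (s p.1) (hs p.1)) (g := c)
    (s := Finset.univ) (by
      rw [Set.eq_univ_iff_forall]
      intro h
      obtain ⟨a, b, hab⟩ := hcov h
      have hex : ∃ h : G, Asym o (fun n => h • s a n) (s b) := ⟨h, hab⟩
      have hc : c (a, b) = hex.choose := dif_pos hex
      have hcs := hex.choose_spec
      rw [← hc] at hcs
      simp only [Set.mem_iUnion]
      refine ⟨(a, b), Finset.mem_univ _, ?_⟩
      rw [mem_leftCoset_iff]
      change Asym o (fun n => ((c (a, b))⁻¹ * h) • s a n) (s a)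
      have := Asym.smul hi (hab.trans h4 hcs.symm) (c (a, b))⁻¹
      simpa [mul_smul] using this)
  obtain ⟨p, _, hp⟩ := this
  exact ⟨p.1, hp⟩

/-- not asymptotic implies bounded products -/
lemma bdd_of_not_asym (hi : Iso G X) {δ : ℝ} (h4 : Hyp4 X δ) (hδ : 0 ≤ δ) {o : X} {g g' : G}
    (hg : Lox δ o g) (hg' : Lox δ o g') (h : G)
    (hn : ¬ Asym o (fun n => h • g ^ n • o) (fun n => g' ^ n • o)) :
    ∃ C, ∀ n m : ℕ, gromovProd o (h • g ^ n • o) (g' ^ m • o) ≤ C := by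
  by_contra hC
  push Not at hC
  apply hn
  intro T
  set C1 := gromovProd o (g • o) (g⁻¹ • o) + 2 * δ with hC1
  set C2 := gromovProd o (g' • o) (g'⁻¹ • o) + 2 * δ with hC2
  have hC1' : 0 ≤ C1 := by have := gp_nonneg o (g • o) (g⁻¹ • o); linarith
  have hC2' : 0 ≤ C2 := by have := gp_nonneg o (g' • o) (g'⁻¹ • o); linarith
  have hh : 0 ≤ dist (h • o) o := dist_nonneg
  set T' := |T| + 2 * δ + C1 + C2 + dist (h • o) o with hT'
  have hTT := le_abs_self T
  have hT0 := abs_nonneg T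
  obtain ⟨k, m, hkm⟩ := hC (T' + T' * dist (g • o) o + T' * dist (g' • o) o + dist (h • o) o)
  obtain ⟨N, hN⟩ := exists_nat_ge T'
  refine ⟨N, fun n hn => ?_⟩
  have hnT : T' ≤ n := hN.trans (by exact_mod_cast hn)
  have hT'0 : 0 ≤ T' := by linarith
  have hd1 : 0 ≤ T' * dist (g • o) o := mul_nonneg hT'0 dist_nonneg
  have hd2 : 0 ≤ T' * dist (g' • o) o := mul_nonneg hT'0 dist_nonneg
  have hk : T' ≤ k := by
    by_contra hk
    push Not at hk
    have h1 := gp_le_left o (h • g ^ k • o) (g' ^ m • o)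
    have h2 := dist_triangle (h • g ^ k • o) (h • o) o
    rw [hi] at h2
    have h3 := dist_pow_le hi o g k
    have h5 := mul_le_mul_of_nonneg_right hk.le (dist_nonneg (x := g • o) (y := o))
    linarith
  have hm : T' ≤ m := by
    by_contra hm
    push Not at hm
    have h1 := gp_le_right o (h • g ^ k • o) (g' ^ m • o)
    have h3 := dist_pow_le hi o g' m
    have h5 := mul_le_mul_of_nonneg_right hm.le (dist_nonneg (x := g' • o) (y := o))
    linarith
  have r1 := hg.ray hi h4 hδ n k
  have r2 := hg'.ray hi h4 hδ m n
  have m1 := le_min hnT hk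
  have m2 := le_min hm hnT
  have r3 : gromovProd o (g ^ n • o) (g ^ k • o) - dist (h • o) o ≤
      gromovProd o (h • g ^ n • o) (h • g ^ k • o) := by
    rw [← gp_smul hi h]
    have := gp_lip_base (h • o) o (h • g ^ n • o) (h • g ^ k • o)
    linarith
  have q1 := h4 o (h • g ^ n • o) (h • g ^ k • o) (g' ^ m • o)
  have q2 := h4 o (h • g ^ n • o) (g' ^ m • o) (g' ^ n • o)
  have s1 : T + 2 * δ ≤ gromovProd o (h • g ^ n • o) (h • g ^ k • o) := by linarith
  have s2 : T + 2 * δ ≤ gromovProd o (h • g ^ k • o) (g' ^ m • o) := by linarith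
  have s3 : T + δ ≤ gromovProd o (g' ^ m • o) (g' ^ n • o) := by linarith
  have s4 := le_min s1 s2
  have s5 : T + δ ≤ gromovProd o (h • g ^ n • o) (g' ^ m • o) := by linarith
  have s6 := le_min s5 s3
  linarith

lemma gp_conj (hi : Iso G X) (o : X) (h : G) (a b : G) :
    gromovProd o ((h * a * h⁻¹) • o) ((h * b * h⁻¹) • o) ≤
      gromovProd o (a • o) (b • o) + 3 * dist (h • o) o := by
  have e1 := gp_lip_base o (h • o) ((h * a * h⁻¹) • o) ((h * b * h⁻¹) • o)
  have e2 := gp_lip_left (h • o) ((h * a * h⁻¹) • o) ((h * a) • o) ((h * b * h⁻¹) • o)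
  have e3 := gp_lip_right (h • o) ((h * a) • o) ((h * b * h⁻¹) • o) ((h * b) • o)
  rw [mul_smul (h * a), hi, dist_inv_self hi] at e2
  rw [mul_smul (h * b), hi, dist_inv_self hi] at e3
  rw [mul_smul h a, mul_smul h b o, gp_smul hi h o (a • o) (b • o)] at e3
  simp only [mul_smul] at *
  rw [dist_comm o] at e1
  linarith

/-- existence of a free subgroup from transversality. -/
lemma free_of_transverse (hi : Iso G X) {δ : ℝ} (h4 : Hyp4 X δ) (hδ : 0 ≤ δ) {o : X} {g : G}
    (hg : Lox δ o g) (h : G) (C : ℝ)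
    (hC : ∀ a b : Bool, ∀ n : ℕ, gromovProd o (h • (cond a g g⁻¹) ^ n • o)
      ((cond b g g⁻¹) ^ n • o) ≤ C) :
    ∃ f : FreeGroup (Fin 2) →* G, Function.Injective f := by
  set C1 := gromovProd o (g • o) (g⁻¹ • o) + 2 * δ with hC1
  have hC1' : 0 ≤ C1 := by have := gp_nonneg o (g • o) (g⁻¹ • o); linarith
  have hh : 0 ≤ dist (h • o) o := dist_nonneg
  set c := |C| + C1 + 3 * dist (h • o) o with hc
  have hCC := le_abs_self C
  have hC0 := abs_nonneg C
  obtain ⟨N, hN⟩ := exists_nat_gt (2 * c + 2 * δ + 2 * dist (h • o) o)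
  let L : ℝ := N - 2 * dist (h • o) o
  let f : Fin 2 → G := ![g ^ N, h * g ^ N * h⁻¹]
  let e : Fin 2 × Bool → G := fun p => ![(cond p.2 g g⁻¹) ^ N, h * (cond p.2 g g⁻¹) ^ N * h⁻¹] p.1
  have hcond : ∀ b : Bool, Lox δ o (cond b g g⁻¹) := by
    intro b; cases b
    · exact hg.inv hi
    · exact hg
  have htr : ∀ b b' : Bool, b ≠ b' →
      gromovProd o ((cond b g g⁻¹) ^ N • o) ((cond b' g g⁻¹) ^ N • o) ≤ C1 := by
    intro b b' hb
    have := hg.transverse hi h4 hδ N N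
    cases b <;> cases b' <;> simp only [cond_true, cond_false, ne_eq, not_true] at hb ⊢
    · rw [gp_comm]; exact this
    · exact this
  have hcross : ∀ b b' : Bool, gromovProd o ((h * (cond b g g⁻¹) ^ N * h⁻¹) • o)
      ((cond b' g g⁻¹) ^ N • o) ≤ c := by
    intro b b'
    have h1 := hC b b' N
    have h2 := gp_lip_left o ((h * (cond b g g⁻¹) ^ N * h⁻¹) • o) ((h * (cond b g g⁻¹) ^ N) • o)
      ((cond b' g g⁻¹) ^ N • o)
    rw [mul_smul (h * _), hi, dist_inv_self hi] at h2
    rw [mul_smul (h * _)]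
    rw [mul_smul h ((cond b g g⁻¹) ^ N) o] at h2
    linarith
  refine free_of_letters hi h4 hδ o (L := L) (c := c) (by linarith) (by simp only [L]; linarith)
    f e ?_ ?_ ?_
  · rintro ⟨i, b⟩
    fin_cases i <;> cases b <;> simp [e, f, mul_assoc]
  · rintro ⟨i, b⟩
    have h1 := (hcond b).grow hi h4 hδ N
    fin_cases i
    · simp only [e, L]
      simp
      linarith
    · have h2 := dist_triangle4 ((cond b g g⁻¹) ^ N • o) (h⁻¹ • (h * (cond b g g⁻¹) ^ N * h⁻¹) • o)
        (h⁻¹ • o) o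
      rw [hi, dist_inv_self hi, ← mul_smul, mul_assoc h, inv_mul_cancel_left, mul_smul _ h⁻¹, hi,
        dist_comm o, dist_inv_self hi] at h2
      simp only [e, L]
      simp only [Fin.mk_one, Matrix.cons_val_one, Matrix.cons_val_zero, mul_smul] at h1 h2 ⊢
      simp at h1 h2 ⊢
      linarith
  · rintro ⟨i, b⟩ ⟨j, b'⟩ hne
    fin_cases i <;> fin_cases j
    · have := htr b b' (by rintro rfl; exact hne rfl)
      change gromovProd o ((cond b g g⁻¹) ^ N • o) ((cond b' g g⁻¹) ^ N • o) ≤ c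
      linarith
    · change gromovProd o ((cond b g g⁻¹) ^ N • o) ((h * (cond b' g g⁻¹) ^ N * h⁻¹) • o) ≤ c
      rw [gp_comm]
      exact hcross _ _
    · exact hcross _ _
    · have := htr b b' (by rintro rfl; exact hne rfl)
      have h2 := gp_conj hi o h ((cond b g g⁻¹) ^ N) ((cond b' g g⁻¹) ^ N)
      change gromovProd o ((h * (cond b g g⁻¹) ^ N * h⁻¹) • o)
        ((h * (cond b' g g⁻¹) ^ N * h⁻¹) • o) ≤ c
      linarith

end lox

section fixd
open Filter
variable {X : Type*} [PseudoMetricSpace X] {G : Type*} [Group G] [MulAction G X]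

lemma bus_close {δ : ℝ} (h4 : Hyp4 X δ) {o u v p : X} (h : dist p o ≤ gromovProd o u v) :
    dist u p - dist u o ≤ dist v p - dist v o + 2 * δ := by
  have h1 := fourpt h4 u p v o
  have h2 : dist u v + dist p o ≤ dist u o + dist p v := by
    unfold gromovProd at h
    have := dist_triangle v p o
    rw [dist_comm p v]
    linarith
  rw [max_eq_right h2, dist_comm p v] at h1
  linarith

lemma bus_close_abs {δ : ℝ} (h4 : Hyp4 X δ) {o u v p : X} (h : dist p o ≤ gromovProd o u v) :
    |(dist u p - dist u o) - (dist v p - dist v o)| ≤ 2 * δ := by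
  have h1 := bus_close h4 h
  have h2 := bus_close h4 (u := v) (v := u) (by rw [gp_comm]; exact h)
  rw [abs_le]; constructor <;> linarith

lemma disp (hi : Iso G X) {δ : ℝ} (h4 : Hyp4 X δ) (hδ : 0 ≤ δ) {o u x : X} {f : G} {t : ℝ}
    (hx : dist x o = t) (hxu : dist x u = dist u o - t) (ht : dist (f • o) o ≤ t)
    (hgp : t + dist (f • o) o ≤ gromovProd o u (f • u)) :
    dist (f • x) x ≤ |dist u (f⁻¹ • o) - dist u o| + 4 * δ := by
  set b := dist u (f⁻¹ • o) - dist u o with hb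
  have ht0 : 0 ≤ t := hx ▸ dist_nonneg
  have h1 := bus_close h4 (o := o) (u := u) (v := f • u) (p := f • x) (by
    have := dist_triangle (f • x) (f • o) o
    rw [hi] at this
    linarith)
  rw [hi] at h1
  have h2 : dist (f • u) o = dist u (f⁻¹ • o) := by
    rw [dist_comm u, dist_inv hi, dist_comm]
  rw [h2] at h1
  have hb1 := le_abs_self b
  have hb2 := neg_abs_le b
  have hb0 := abs_nonneg b
  -- distance from `f x` to `o`
  have h3 : dist (f • x) o ≤ t + |b| + 2 * δ := by
    have e : dist (f • x) o = dist x (f⁻¹ • o) := by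
      rw [dist_comm x, dist_inv hi, dist_comm]
    have h5 := fourpt h4 x (f⁻¹ • o) o u
    have h6 := dist_inv_self hi f o
    rw [e]
    rw [dist_comm o u, dist_comm (f⁻¹ • o) u] at h5
    rcases max_choice (dist x o + dist u (f⁻¹ • o)) (dist x u + dist (f⁻¹ • o) o) with h | h
    · rw [h] at h5; linarith
    · rw [h] at h5; linarith
  have h7 := fourpt h4 (f • x) x o u
  rw [dist_comm o u, dist_comm (f • x) u] at h7
  rw [dist_comm u x] at h1
  rcases max_choice (dist (f • x) o + dist x u) (dist u (f • x) + dist x o) with h | h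
  · rw [h] at h7; linarith
  · rw [h] at h7; linarith

lemma fixed_point (hi : Iso G X) {δ : ℝ} (h4 : Hyp4 X δ) (hδ : 0 ≤ δ) (hgeo : IsGeodesicSpace X)
    (o : X) (u : ℕ → X)
    (hu : ∀ T : ℝ, ∃ N : ℕ, ∀ n m, N ≤ n → N ≤ m → T ≤ gromovProd o (u n) (u m))
    (H : Subgroup G) (hH : ∀ f ∈ H, Asym o (fun n => f • u n) u) :
    ∃ (β : G → ℝ) (E C0 : ℝ), (∀ f ∈ H, ∀ g ∈ H, |β (f * g) - β f - β g| ≤ E) ∧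
      ∀ F : Finset G, (∀ f ∈ F, f ∈ H) → ∀ R : ℝ, ∃ x y : X, R ≤ dist x y ∧
        ∀ f ∈ F, dist (f • x) x ≤ |β f| + C0 ∧ dist (f • y) y ≤ |β f| + C0 := by
  have hβ : ∀ f : G, ∃ b : ℝ, ∀ᶠ n in atTop,
      |(dist (u n) (f⁻¹ • o) - dist (u n) o) - b| ≤ 2 * δ := by
    intro f
    obtain ⟨N, hN⟩ := hu (dist (f⁻¹ • o) o)
    refine ⟨dist (u N) (f⁻¹ • o) - dist (u N) o, ?_⟩
    filter_upwards [eventually_ge_atTop N] with n hn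
    exact bus_close_abs h4 (hN n N hn le_rfl)
  choose β hβ using hβ
  have hasym : ∀ f ∈ H, ∀ T : ℝ, ∀ᶠ n in atTop, T ≤ gromovProd o (u n) (f • u n) := by
    intro f hf T
    obtain ⟨N, hN⟩ := hH f hf T
    filter_upwards [eventually_ge_atTop N] with n hn
    rw [gp_comm]; exact hN n hn
  refine ⟨β, 8 * δ, 6 * δ, ?_, ?_⟩
  · intro f hf g hg
    obtain ⟨n, h1, h2, h3, h5⟩ := ((hβ (f * g)).and ((hβ f).and ((hβ g).and
      (hasym g hg (dist (f⁻¹ • o) o))))).exists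
    have h6 := bus_close_abs h4 h5
    have e1 : dist (u n) ((f * g)⁻¹ • o) = dist (g • u n) (f⁻¹ • o) := by
      rw [mul_inv_rev, mul_smul, dist_comm, dist_inv hi, dist_comm]
    have e2 : dist (g • u n) o = dist (u n) (g⁻¹ • o) := by
      rw [dist_comm (u n), dist_inv hi, dist_comm]
    rw [e1] at h1
    rw [e2] at h6
    rw [abs_le] at *
    constructor <;> linarith [h1.1, h1.2, h2.1, h2.2, h3.1, h3.2, h6.1, h6.2]
  · intro F hF R
    set t : ℝ := ∑ f ∈ F, dist (f • o) o with ht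
    have ht0 : 0 ≤ t := Finset.sum_nonneg fun _ _ => dist_nonneg
    have htf : ∀ f ∈ F, dist (f • o) o ≤ t := fun f hf =>
      Finset.single_le_sum (f := fun f : G => dist (f • o) o) (fun _ _ => dist_nonneg) hf
    have hR0 := abs_nonneg R
    have ev1 : ∀ᶠ n in atTop, ∀ f ∈ F, t + |R| + t ≤ gromovProd o (u n) (f • u n) :=
      (Filter.eventually_all_finset F).2 fun f hf => hasym f (hF f hf) _
    have ev2 : ∀ᶠ n in atTop, ∀ f ∈ F, |(dist (u n) (f⁻¹ • o) - dist (u n) o) - β f| ≤ 2 * δ :=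
      (Filter.eventually_all_finset F).2 fun f _ => hβ f
    have ev3 : ∀ᶠ n in atTop, t + |R| ≤ dist o (u n) := by
      obtain ⟨N, hN⟩ := hu (t + |R|)
      filter_upwards [eventually_ge_atTop N] with n hn
      have := hN n n hn hn
      rwa [gp_self_right, dist_comm] at this
    obtain ⟨n, h1, h2, h3⟩ := (ev1.and (ev2.and ev3)).exists
    obtain ⟨α, ha0, ha1, ha⟩ := hgeo o (u n)
    have key : ∀ s, t ≤ s → s ≤ t + |R| → ∀ f ∈ F, dist (f • α s) (α s) ≤ |β f| + 6 * δ := by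
      intro s hs1 hs2 f hf
      have hs : s ∈ Set.Icc (0 : ℝ) (dist o (u n)) := ⟨by linarith, by linarith⟩
      have d1 := ha s hs 0 ⟨le_rfl, dist_nonneg⟩
      have d2 := ha s hs _ ⟨dist_nonneg, le_rfl⟩
      rw [ha0, sub_zero, abs_of_nonneg hs.1] at d1
      rw [ha1, abs_of_nonpos (by linarith [hs.2]), dist_comm o] at d2
      have q1 := htf f hf
      have q2 := h1 f hf
      have := disp hi h4 hδ (f := f) d1 (by linarith) (by linarith) (by linarith)
      have q3 := h2 f hf
      have q4 := abs_sub_abs_le_abs_sub (dist (u n) (f⁻¹ • o) - dist (u n) o) (β f)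
      linarith
    refine ⟨α t, α (t + |R|), ?_, fun f hf => ⟨key t le_rfl (by linarith) f hf,
      key (t + |R|) (by linarith) le_rfl f hf⟩⟩
    rw [ha t ⟨ht0, by linarith⟩ (t + |R|) ⟨by linarith, h3⟩]
    rw [show t - (t + |R|) = -|R| by ring, abs_neg, abs_abs]
    exact le_abs_self R

/-- Without loxodromic elements the orbit has a unique limit point. -/
lemma no_lox (hi : Iso G X) {δ : ℝ} (h4 : Hyp4 X δ) (hδ : 0 ≤ δ) (o : X)
    (hno : ∀ g : G, ¬ Lox δ o g) (g h : G) :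
    min (dist (g • o) o) (dist (h • o) o) / 2 - ((3 * δ + 1) / 2 + 4 * δ) ≤
      gromovProd o (g • o) (h • o) := by
  by_contra hc
  push Not at hc
  have hg := hno g
  have hh := hno h
  have hf := hno (g⁻¹ * h)
  unfold Lox at hg hh hf
  push Not at hg hh hf
  have m1 := min_le_left (dist (g • o) o) (dist (h • o) o)
  have m2 := min_le_right (dist (g • o) o) (dist (h • o) o)
  set P := gromovProd o (g • o) (h • o) with hP
  have a1 : gromovProd o (g⁻¹ • o) ((g⁻¹ * h) • o) = dist (g • o) o - P := by
    rw [gp_flip o, dist_inv_self hi, gp_smul_base hi, inv_inv, mul_smul, smul_inv_smul]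
  have a2 : gromovProd o ((h⁻¹ * g) • o) (h⁻¹ • o) = dist (h • o) o - P := by
    rw [gp_comm, gp_flip o, dist_inv_self hi, gp_smul_base hi, inv_inv, mul_smul, smul_inv_smul,
      gp_comm]
  have a3 : dist ((g⁻¹ * h) • o) o = dist (g • o) o + dist (h • o) o - 2 * P := by
    rw [mul_smul, dist_inv hi, hP]
    unfold gromovProd
    rw [dist_comm (h • o) (g • o)]
    ring
  rw [mul_inv_rev, inv_inv, a3] at hf
  have q1 := h4 o (g • o) (g⁻¹ • o) ((g⁻¹ * h) • o)
  have q2 := h4 o (g • o) ((g⁻¹ * h) • o) ((h⁻¹ * g) • o)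
  have q3 := h4 o (g • o) ((h⁻¹ * g) • o) (h⁻¹ • o)
  have q4 := h4 o (g • o) (h⁻¹ • o) (h • o)
  rw [gp_comm o (h⁻¹ • o) (h • o)] at q4
  rw [a1] at q1
  rw [a2] at q3
  have c1 : P + 4 * δ < gromovProd o (g • o) (g⁻¹ • o) := by linarith
  have c2 : P + 4 * δ < dist (g • o) o - P := by
    linarith [gp_nonneg o (g • o) (h • o)]
  have c3 : P + 3 * δ < gromovProd o (g • o) ((g⁻¹ * h) • o) := by
    have := lt_min c1 c2; linarith
  have c4 : P + 4 * δ < gromovProd o ((g⁻¹ * h) • o) ((h⁻¹ * g) • o) := by linarith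
  have c5 : P + 2 * δ < gromovProd o (g • o) ((h⁻¹ * g) • o) := by
    have := lt_min c3 (show P + 3 * δ < gromovProd o ((g⁻¹ * h) • o) ((h⁻¹ * g) • o) by linarith)
    linarith
  have c6 : P + 2 * δ < dist (h • o) o - P := by
    linarith [gp_nonneg o (g • o) (h • o)]
  have c7 : P + δ < gromovProd o (g • o) (h⁻¹ • o) := by
    have := lt_min c5 c6
    linarith
  have c8 : P + δ < gromovProd o (h • o) (h⁻¹ • o) := by linarith
  have := lt_min c7 c8
  linarith

/-- The trichotomy for one factor. -/
lemma factor (hi : Iso G X) {δ : ℝ} (h4 : Hyp4 X δ) (hδ : 0 ≤ δ) (hgeo : IsGeodesicSpace X)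
    (o : X) :
    (∃ f : FreeGroup (Fin 2) →* G, Function.Injective f) ∨
    ∃ H : Subgroup G, H.FiniteIndex ∧
    ∃ (β : G → ℝ) (E C0 : ℝ), (∀ f ∈ H, ∀ g ∈ H, |β (f * g) - β f - β g| ≤ E) ∧
      ∀ F : Finset G, (∀ f ∈ F, f ∈ H) → ∀ R : ℝ, ∃ x y : X,
        (¬ (∃ B : ℝ, ∀ g : G, dist (g • o) o ≤ B) → R ≤ dist x y) ∧
        ∀ f ∈ F, dist (f • x) x ≤ |β f| + C0 ∧ dist (f • y) y ≤ |β f| + C0 := by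
  by_cases hb : ∃ B : ℝ, ∀ g : G, dist (g • o) o ≤ B
  · right
    obtain ⟨B, hB⟩ := hb
    refine ⟨⊤, inferInstance, fun _ => 0, 0, B, by simp, fun F _ R => ⟨o, o, ?_, ?_⟩⟩
    · intro h; exact absurd ⟨B, hB⟩ h
    · intro f _
      have := hB f
      simpa using this
  -- reduce to a finite index subgroup fixing a point at infinity
  suffices hs : (∃ f : FreeGroup (Fin 2) →* G, Function.Injective f) ∨
      ∃ H : Subgroup G, H.FiniteIndex ∧ ∃ u : ℕ → X,
        (∀ T : ℝ, ∃ N : ℕ, ∀ n m, N ≤ n → N ≤ m → T ≤ gromovProd o (u n) (u m)) ∧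
        (∀ f ∈ H, Asym o (fun n => f • u n) u) by
    rcases hs with hs | ⟨H, hfi, u, hu, hH⟩
    · exact Or.inl hs
    · right
      obtain ⟨β, E, C0, h1, h2⟩ := fixed_point hi h4 hδ hgeo o u hu H hH
      refine ⟨H, hfi, β, E, C0, h1, fun F hF R => ?_⟩
      obtain ⟨x, y, hxy, h⟩ := h2 F hF R
      exact ⟨x, y, fun _ => hxy, h⟩
  by_cases hlox : ∃ g : G, Lox δ o g
  · obtain ⟨g, hg⟩ := hlox
    let e : Bool → G := fun a => cond a g g⁻¹
    have he : ∀ a, Lox δ o (e a) := by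
      intro b; cases b
      · exact hg.inv hi
      · exact hg
    let s : Bool → ℕ → X := fun a n => e a ^ n • o
    have hgs : ∀ a, ∀ T : ℝ, ∃ N : ℕ, ∀ n m, N ≤ n → N ≤ m →
        T ≤ gromovProd o (s a n) (s a m) := by
      intro a T
      obtain ⟨N, hN⟩ := exists_nat_ge
        (T + (gromovProd o (e a • o) ((e a)⁻¹ • o) + 2 * δ))
      refine ⟨N, fun n m hn hm => ?_⟩
      have h1 := (he a).ray hi h4 hδ n m
      have hn' : (N : ℝ) ≤ n := by exact_mod_cast hn
      have hm' : (N : ℝ) ≤ m := by exact_mod_cast hm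
      have := le_min hn' hm'
      simp only [s]
      linarith
    have hss : ∀ a, Asym o (s a) (s a) := by
      intro a T
      obtain ⟨N, hN⟩ := hgs a T
      exact ⟨N, fun n hn => hN n n hn hn⟩
    by_cases hcov : ∀ h : G, ∃ a b, Asym o (fun n => h • s a n) (s b)
    · right
      obtain ⟨a, ha⟩ := cover hi h4 o s hss hcov
      exact ⟨_, ha, s a, hgs a, fun f hf => hf⟩
    · left
      push Not at hcov
      obtain ⟨h, hh⟩ := hcov
      have hbd : ∀ a b, ∃ C, ∀ n m : ℕ, gromovProd o (h • e a ^ n • o) (e b ^ m • o) ≤ C :=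
        fun a b => bdd_of_not_asym hi h4 hδ (he a) (he b) h (hh a b)
      choose C hC using hbd
      refine free_of_transverse hi h4 hδ hg h
        (max (max (C true true) (C true false)) (max (C false true) (C false false))) ?_
      intro a b n
      refine (hC a b n n).trans ?_
      cases a <;> cases b <;> simp
  · right
    push Not at hlox hb
    have hnl := no_lox hi h4 hδ o hlox
    choose g hg using fun n : ℕ => hb n
    refine ⟨⊤, inferInstance, fun n => g n • o, ?_, ?_⟩
    · intro T
      obtain ⟨N, hN⟩ := exists_nat_ge (2 * (T + ((3 * δ + 1) / 2 + 4 * δ)))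
      refine ⟨N, fun n m hn hm => ?_⟩
      have hn' : (N : ℝ) ≤ n := by exact_mod_cast hn
      have hm' : (N : ℝ) ≤ m := by exact_mod_cast hm
      have := le_min (hn'.trans (hg n).le) (hm'.trans (hg m).le)
      have := hnl (g n) (g m)
      linarith
    · intro f _ T
      obtain ⟨N, hN⟩ := exists_nat_ge (2 * (T + ((3 * δ + 1) / 2 + 4 * δ)) + dist (f • o) o)
      refine ⟨N, fun n hn => ?_⟩
      have hn' : (N : ℝ) ≤ n := by exact_mod_cast hn
      have h1 := hnl (f * g n) (g n)
      rw [mul_smul] at h1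
      have h2 := dist_triangle_left (f • g n • o) (f • o) o
      have h3 := dist_triangle (f • g n • o) o (f • o)
      rw [hi, dist_comm o] at h3
      have h5 := hg n
      have h6 := le_min
        (show 2 * (T + ((3 * δ + 1) / 2 + 4 * δ)) ≤ dist (f • g n • o) o by linarith)
        (show 2 * (T + ((3 * δ + 1) / 2 + 4 * δ)) ≤ dist (g n • o) o by
          linarith [dist_nonneg (x := f • o) (y := o)])
      linarith

end fixd

section alg
open Filter Topology

/-- A proper quasimorphism of an abelian group to `ℝ^D` is at bounded distance from a
homomorphism. -/
lemma homogenize {A : Type*} [CommGroup A] {D : ℕ} (β : A → (Fin D → ℝ)) (E : ℝ)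
    (hq : ∀ a b, ‖β (a * b) - β a - β b‖ ≤ E) :
    ∃ φ : A →* Multiplicative (Fin D → ℝ), ∀ a, ‖β a - (φ a).toAdd‖ ≤ E := by
  let s : A → ℕ → (Fin D → ℝ) := fun a n => ((2 : ℝ) ^ n)⁻¹ • β (a ^ 2 ^ n)
  have hs : ∀ a n, dist (s a n) (s a (n + 1)) ≤ E / 2 / 2 ^ n := by
    intro a n
    have h1 := hq (a ^ 2 ^ n) (a ^ 2 ^ n)
    have h2 : s a (n + 1) - s a n = ((2 : ℝ) ^ (n + 1))⁻¹ •
        (β (a ^ 2 ^ n * a ^ 2 ^ n) - β (a ^ 2 ^ n) - β (a ^ 2 ^ n)) := by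
      simp only [s]
      have : a ^ 2 ^ (n + 1) = a ^ 2 ^ n * a ^ 2 ^ n := by
        rw [← pow_add]; congr 1; ring
      rw [this]
      ext i
      simp only [Pi.sub_apply, Pi.smul_apply, smul_eq_mul]
      field_simp
      ring
    rw [dist_comm, dist_eq_norm, h2, norm_smul, Real.norm_of_nonneg (by positivity)]
    calc ((2 : ℝ) ^ (n + 1))⁻¹ * _ ≤ ((2 : ℝ) ^ (n + 1))⁻¹ * E := by gcongr
      _ = E / 2 / 2 ^ n := by field_simp; ring
  have hlim : ∀ a, ∃ x, Tendsto (s a) atTop (𝓝 x) := fun a =>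
    cauchySeq_tendsto_of_complete (cauchySeq_of_le_geometric_two (hs a))
  choose φ hφ using hlim
  have hadd : ∀ a b, φ (a * b) = φ a + φ b := by
    intro a b
    have h1 : Tendsto (fun n => s (a * b) n - s a n - s b n) atTop (𝓝 (φ (a * b) - φ a - φ b)) :=
      ((hφ _).sub (hφ _)).sub (hφ _)
    have h2 : Tendsto (fun n => s (a * b) n - s a n - s b n) atTop (𝓝 0) := by
      have hz : Tendsto (fun n : ℕ => ((2 : ℝ) ^ n)⁻¹ * E) atTop (𝓝 0) := by
        have : Tendsto (fun n : ℕ => ((2 : ℝ)⁻¹ ^ n) * E) atTop (𝓝 (0 * E)) :=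
          (tendsto_pow_atTop_nhds_zero_of_lt_one (by norm_num) (by norm_num)).mul_const E
        simpa [inv_pow] using this
      refine squeeze_zero_norm (fun n => ?_) hz
      have h3 : s (a * b) n - s a n - s b n = ((2 : ℝ) ^ n)⁻¹ •
          (β (a ^ 2 ^ n * b ^ 2 ^ n) - β (a ^ 2 ^ n) - β (b ^ 2 ^ n)) := by
        simp only [s, mul_pow, smul_sub]
      rw [h3, norm_smul, Real.norm_of_nonneg (by positivity)]
      have := hq (a ^ 2 ^ n) (b ^ 2 ^ n)
      gcongr
    have := tendsto_nhds_unique h1 h2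
    rw [sub_sub, sub_eq_zero] at this
    exact this
  refine ⟨MonoidHom.mk' (fun a => Multiplicative.ofAdd (φ a)) (fun a b => ?_), fun a => ?_⟩
  · rw [hadd]; rfl
  · have := dist_le_of_le_geometric_two_of_tendsto₀ (hs a) (hφ a)
    rw [dist_eq_norm] at this
    simpa [s] using this

/-- Discrete image gives a free abelian quotient. -/
lemma discrete_image {G : Type*} [Group G] {D : ℕ} (φ : G →* Multiplicative (Fin D → ℝ))
    (hfin : {g : G | ‖(φ g).toAdd‖ < 1}.Finite) :
    ∃ k ≤ D, Nonempty ((G ⧸ φ.ker) ≃* Multiplicative (Fin k → ℤ)) := by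
  let L : Submodule ℤ (Fin D → ℝ) := AddSubgroup.toIntSubmodule (Subgroup.toAddSubgroup' φ.range)
  have hmem : ∀ x, x ∈ L ↔ ∃ g, φ g = Multiplicative.ofAdd x := fun x => Iff.rfl
  have hball : {x : L | ‖x‖ < 1}.Finite := by
    refine Set.Finite.of_injOn (f := fun x : L => (x : Fin D → ℝ))
      (t := (fun g => (φ g).toAdd) '' {g : G | ‖(φ g).toAdd‖ < 1}) ?_
      Subtype.val_injective.injOn (hfin.image _)
    rintro ⟨x, hx⟩ hx1
    obtain ⟨g, hg⟩ := (hmem x).1 hx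
    refine ⟨g, ?_, ?_⟩
    · change ‖(φ g).toAdd‖ < 1
      rw [hg]; exact hx1
    · change (φ g).toAdd = x
      rw [hg]; rfl
  have hdisc : DiscreteTopology L := by
    apply discreteTopology_of_isOpen_singleton_zero
    have : ({0} : Set L) = Metric.ball 0 1 ∩ ({x : L | ‖x‖ < 1} \ {0})ᶜ := by
      ext x
      constructor
      · rintro rfl
        exact ⟨by simp, by simp⟩
      · rintro ⟨h1, h2⟩
        by_contra h3
        exact h2 ⟨by simpa using h1, h3⟩
    rw [this]
    exact Metric.isOpen_ball.inter (hball.subset Set.sdiff_subset).isClosed.isOpen_compl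
  have hrank : Module.finrank ℤ L ≤ D := by
    have h1 := Real.finrank_eq_int_finrank_of_discrete (s := (L : Set (Fin D → ℝ)))
      (by rw [Submodule.span_eq]; exact hdisc)
    unfold Set.finrank at h1
    rw [Submodule.span_eq] at h1
    rw [← h1]
    refine (Submodule.finrank_le _).trans ?_
    simp
  refine ⟨Module.finrank ℤ L, hrank, ?_⟩
  let e := (Module.finBasis ℤ L).equivFun
  let e1 : (G ⧸ φ.ker) ≃* φ.range := QuotientGroup.quotientKerEquivRange φ
  let e2 : φ.range ≃* Multiplicative L :=
    { toFun := fun x => Multiplicative.ofAdd ⟨x.1.toAdd, x.2⟩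
      invFun := fun x => ⟨Multiplicative.ofAdd x.toAdd.1, x.toAdd.2⟩
      left_inv := fun _ => rfl
      right_inv := fun _ => rfl
      map_mul' := fun _ _ => rfl }
  exact ⟨e1.trans (e2.trans (AddEquiv.toMultiplicative e.toAddEquiv))⟩

lemma proper_quasi {G : Type*} [Group G] {D : ℕ} (β : G → (Fin D → ℝ)) (E : ℝ)
    (hq : ∀ a b, ‖β (a * b) - β a - β b‖ ≤ E)
    (hp : ∀ C : ℝ, {g : G | ‖β g‖ ≤ C}.Finite) :
    ∃ k ≤ D, ∃ (K : Subgroup G) (_ : K.Normal), Finite K ∧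
      Nonempty ((G ⧸ K) ≃* Multiplicative (Fin k → ℤ)) := by
  have hmul : ∀ a b, ‖β (a * b)‖ ≤ ‖β a + β b‖ + E := by
    intro a b
    have h1 := norm_add_le (β (a * b) - β a - β b) (β a + β b)
    rw [show β (a * b) - β a - β b + (β a + β b) = β (a * b) by abel] at h1
    linarith [hq a b]
  -- commutators are bounded
  have hcomm : ∀ a b, ‖β (a * b * a⁻¹ * b⁻¹)‖ ≤ 5 * E := by
    intro a b
    -- `[a,b] * (b * a) = a * b`
    have h1 := hq (a * b * a⁻¹ * b⁻¹) (b * a)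
    rw [show a * b * a⁻¹ * b⁻¹ * (b * a) = a * b by group] at h1
    have h2 := hq a b
    have h3 := hq b a
    have e : β (a * b * a⁻¹ * b⁻¹) = -(β (a * b) - β (a * b * a⁻¹ * b⁻¹) - β (b * a))
        + (β (a * b) - β a - β b) - (β (b * a) - β b - β a) := by abel
    have n1 := norm_sub_le (-(β (a * b) - β (a * b * a⁻¹ * b⁻¹) - β (b * a))
        + (β (a * b) - β a - β b)) (β (b * a) - β b - β a)
    have n2 := norm_add_le (-(β (a * b) - β (a * b * a⁻¹ * b⁻¹) - β (b * a)))
        (β (a * b) - β a - β b)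
    rw [norm_neg] at n2
    rw [← e] at n1
    have := norm_nonneg (β (a * b) - β a - β b)
    linarith
  have hfc : Finite (commutatorSet G) := by
    refine Set.Finite.to_subtype ((hp (5 * E)).subset ?_)
    rintro x ⟨a, b, rfl⟩
    rw [commutatorElement_def]
    exact hcomm a b
  have hfcom : Finite (commutator G) := inferInstance
  obtain ⟨M, hM⟩ : ∃ M, ∀ c ∈ commutator G, ‖β c‖ ≤ M := by
    have hf : (commutator G : Set G).Finite := Set.toFinite _
    obtain ⟨M, hM⟩ := (hf.image fun c => ‖β c‖).bddAbove
    exact ⟨M, fun c hc => hM ⟨c, hc, rfl⟩⟩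
  have hsec : ∀ a : Abelianization G, ∃ g : G, Abelianization.of g = a := by
    intro a
    exact QuotientGroup.mk_surjective a
  choose sec hsec using hsec
  have hker : ∀ g g' : G, Abelianization.of g = Abelianization.of g' → ‖β g - β g'‖ ≤ M + E := by
    intro g g' h
    have h1 : g * g'⁻¹ ∈ commutator G := by
      rw [← Abelianization.ker_of, MonoidHom.mem_ker, map_mul, map_inv, h, mul_inv_cancel]
    have h2 := hq (g * g'⁻¹) g'
    rw [inv_mul_cancel_right] at h2
    have h3 := norm_add_le (β g - β (g * g'⁻¹) - β g') (β (g * g'⁻¹))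
    rw [show β g - β (g * g'⁻¹) - β g' + β (g * g'⁻¹) = β g - β g' by abel] at h3
    linarith [hM _ h1]
  obtain ⟨φ, hφ⟩ := homogenize (fun a => β (sec a)) (M + E + E) (by
    intro a b
    have h1 := hker (sec (a * b)) (sec a * sec b) (by rw [map_mul, hsec, hsec, hsec])
    have h2 := hq (sec a) (sec b)
    have h3 := norm_add_le (β (sec (a * b)) - β (sec a * sec b))
      (β (sec a * sec b) - β (sec a) - β (sec b))
    rw [show β (sec (a * b)) - β (sec a * sec b) + (β (sec a * sec b) - β (sec a) - β (sec b))
      = β (sec (a * b)) - β (sec a) - β (sec b) by abel] at h3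
    linarith)
  let ψ : G →* Multiplicative (Fin D → ℝ) := φ.comp Abelianization.of
  have hψ : ∀ g, ‖β g‖ ≤ ‖(ψ g).toAdd‖ + (M + E + E) + (M + E) := by
    intro g
    have h1 := hφ (Abelianization.of g)
    have h2 := hker g (sec (Abelianization.of g)) (hsec _).symm
    have h3 := norm_add₃_le (a := β g - β (sec (Abelianization.of g)))
      (b := β (sec (Abelianization.of g)) - (φ (Abelianization.of g)).toAdd)
      (c := (φ (Abelianization.of g)).toAdd)
    rw [show β g - β (sec (Abelianization.of g)) +
      (β (sec (Abelianization.of g)) - (φ (Abelianization.of g)).toAdd) +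
      (φ (Abelianization.of g)).toAdd = β g by abel] at h3
    change _ ≤ ‖(φ (Abelianization.of g)).toAdd‖ + _ + _
    linarith
  have hfin : {g : G | ‖(ψ g).toAdd‖ < 1}.Finite := by
    refine (hp (1 + (M + E + E) + (M + E))).subset ?_
    intro g hg
    have hg' : ‖(ψ g).toAdd‖ < 1 := hg
    have := hψ g
    change ‖β g‖ ≤ _
    linarith
  obtain ⟨k, hk, hiso⟩ := discrete_image ψ hfin
  refine ⟨k, hk, ψ.ker, inferInstance, ?_, hiso⟩
  refine Set.Finite.to_subtype (hfin.subset ?_)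
  intro g hg
  change ‖(ψ g).toAdd‖ < 1
  rw [show ψ g = 1 from hg]
  simp

end alg

end TitsAux

/-- Tits' Alternative. If a group `Γ` acts by isometries on each factor of a
finite product of geodesic `δ`-hyperbolic spaces, and the diagonal action on the product (with
the sup metric) is acylindrical and not elliptic, then `Γ` contains a free group of rank 2 or is
virtually isomorphic to `ℤᵏ` for some `1 ≤ k ≤ D`. -/
theorem tits_alternative
    {D : ℕ} (hD : 1 ≤ D) (δ : ℝ) (hδ : 0 ≤ δ)
    (X : Fin D → Type*) [∀ i, MetricSpace (X i)]
    (Γ : Type*) [Group Γ] [∀ i, MulAction Γ (X i)]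
    (hiso : ∀ (i : Fin D) (g : Γ) (x y : X i), dist (g • x) (g • y) = dist x y)
    (hgeo : ∀ i, IsGeodesicSpace (X i))
    (hhyp : ∀ i, IsDeltaHyperbolic (X i) δ)
    (hacyl : IsAcylindricalAction Γ (∀ i, X i))
    (hnotell : ∃ x : ∀ i, X i, ¬ Bornology.IsBounded (MulAction.orbit Γ x)) :
    (∃ f : FreeGroup (Fin 2) →* Γ, Function.Injective f) ∨
      (∃ k : ℕ, 1 ≤ k ∧ k ≤ D ∧ ∃ Γ' : Subgroup Γ, Γ'.FiniteIndex ∧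
        ∃ (K : Subgroup Γ') (_ : K.Normal), Finite K ∧
          Nonempty ((Γ' ⧸ K) ≃* Multiplicative (Fin k → ℤ))) := by
  obtain ⟨o, ho⟩ := hnotell
  by_cases hfree : ∃ f : FreeGroup (Fin 2) →* Γ, Function.Injective f
  · exact Or.inl hfree
  right
  have hfac := fun i => (TitsAux.factor (G := Γ) (hiso i)
    (TitsAux.hyp4_of_delta (hgeo i) (hhyp i)) hδ (hgeo i) (o i)).resolve_left hfree
  choose H hHfi β E C0 hq hP using hfac
  -- an unbounded factor
  have hub : ∃ j, ¬ ∃ B : ℝ, ∀ g : Γ, dist (g • o j) (o j) ≤ B := by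
    by_contra hcon
    push Not at hcon
    choose B hB using hcon
    apply ho
    rw [Metric.isBounded_iff_subset_closedBall o]
    refine ⟨∑ i, |B i|, ?_⟩
    rintro _ ⟨g, rfl⟩
    rw [Metric.mem_closedBall, dist_pi_le_iff (Finset.sum_nonneg fun _ _ => abs_nonneg _)]
    intro i
    refine ((hB i g).trans (le_abs_self _)).trans ?_
    exact Finset.single_le_sum (f := fun i => |B i|) (fun _ _ => abs_nonneg _) (Finset.mem_univ i)
  obtain ⟨j, hj⟩ := hub
  let Γ' : Subgroup Γ := ⨅ i, H i
  have hΓ' : Γ'.FiniteIndex := Subgroup.finiteIndex_iInf hHfi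
  have hmem : ∀ g : Γ', ∀ i, (g : Γ) ∈ H i := fun g i => (Subgroup.mem_iInf.1 g.2) i
  let b : Γ' → (Fin D → ℝ) := fun g i => β i g
  have hE0 : (0 : ℝ) ≤ ∑ i, |E i| := Finset.sum_nonneg fun _ _ => abs_nonneg _
  have hC0 : ∀ i, C0 i ≤ ∑ i, |C0 i| := fun i => (le_abs_self _).trans
    (Finset.single_le_sum (f := fun i => |C0 i|) (fun _ _ => abs_nonneg _) (Finset.mem_univ i))
  have hC00 : (0 : ℝ) ≤ ∑ i, |C0 i| := Finset.sum_nonneg fun _ _ => abs_nonneg _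
  obtain ⟨k, hkD, K, hK, hKfin, ⟨e⟩⟩ := TitsAux.proper_quasi b (∑ i, |E i|) (by
      intro f g
      rw [pi_norm_le_iff_of_nonneg hE0]
      intro i
      refine ((hq i f (hmem f i) g (hmem g i)).trans (le_abs_self _)).trans ?_
      exact Finset.single_le_sum (f := fun i => |E i|) (fun _ _ => abs_nonneg _)
        (Finset.mem_univ i)) (by
      intro C
      by_contra hinf
      have hinf : {g : Γ' | ‖b g‖ ≤ C}.Infinite := hinf
      set ε : ℝ := |C| + ∑ i, |C0 i| + 1 with hε
      have hε0 : 0 < ε := by positivity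
      obtain ⟨R, N, hR, hN⟩ := hacyl ε hε0
      obtain ⟨F, hFs, hFc⟩ := hinf.exists_subset_card_eq (N + 1)
      let F' : Finset Γ := F.map ⟨Subtype.val, Subtype.val_injective⟩
      have hF' : ∀ f ∈ F', ∃ g ∈ F, (g : Γ) = f := by
        intro f hf
        obtain ⟨g, hg, rfl⟩ := Finset.mem_map.1 hf
        exact ⟨g, hg, rfl⟩
      have hpts := fun i => hP i F' (by
        intro f hf
        obtain ⟨g, _, rfl⟩ := hF' f hf
        exact hmem g i) R
      choose x y hxy hdisp using hpts
      have hbd : ∀ f ∈ F', ∀ i, |β i f| + C0 i ≤ ε := by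
        intro f hf i
        obtain ⟨g, hg, rfl⟩ := hF' f hf
        have h1 : ‖b g‖ ≤ C := hFs hg
        have h2 : |β i g| ≤ ‖b g‖ := norm_le_pi_norm (b g) i
        have := hC0 i
        have := le_abs_self C
        linarith
      obtain ⟨hfin, hcard⟩ := hN x y ((hxy j hj).trans (dist_le_pi_dist x y j))
      have hsub : (F' : Set Γ) ⊆ coarseStab2 Γ ε x y := by
        intro f hf
        constructor
        · rw [dist_pi_le_iff hε0.le]
          exact fun i => (hdisp i f hf).1.trans (hbd f hf i)
        · rw [dist_pi_le_iff hε0.le]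
          exact fun i => (hdisp i f hf).2.trans (hbd f hf i)
      have h1 := Set.ncard_le_ncard hsub hfin
      rw [Set.ncard_coe_finset, Finset.card_map, hFc] at h1
      omega)
  refine ⟨k, ?_, hkD, Γ', hΓ', K, hK, hKfin, ⟨e⟩⟩
  -- `k ≥ 1`
  by_contra hk
  have hk0 : k = 0 := by omega
  subst hk0
  have hfq : Finite (Γ' ⧸ K) := by
    have : Finite (Multiplicative (Fin 0 → ℤ)) := inferInstanceAs (Finite (Fin 0 → ℤ))
    exact Finite.of_equiv _ e.symm.toEquiv
  have hfΓ' : Finite Γ' :=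
    Finite.of_equiv _ (Subgroup.groupEquivQuotientProdSubgroup (s := K)).symm
  have hfqΓ : Finite (Γ ⧸ Γ') := inferInstance
  have hfΓ : Finite Γ :=
    Finite.of_equiv _ (Subgroup.groupEquivQuotientProdSubgroup (s := Γ')).symm
  exact ho (Set.finite_range _).isBounded
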